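/- arXiv:2505.20351 — 3 statements merged into one kernel-verified Lean document; each statement's English description precedes it below -/
import Mathlib

section
/- Let b > 0, μ₁ > 0, μ₂ > 0, and let X₁ ~ Lap(μ₁, b) and X₂ ~ Lap(μ₂, b) be independent. Let a > 0 with a ≠ 1 and suppose μ₁/a < μ₂. Then P(X₁ < a·X₂) = 1 + exp((μ₁/a − μ₂)/b)·(a²/(2(a+1)(1−a))) − exp((μ₁ − a·μ₂)/b)·(1/(2(a+1)(1−a))). -/
open MeasureTheory ProbabilityTheory Filter

/-- The Laplace distribution on `ℝ` with location `μ` and scale `b`,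
given by the density `x ↦ (1/(2b)) * exp (-|x - μ| / b)`. -/
noncomputable def laplaceMeasure (μ b : ℝ) : Measure ℝ :=
  MeasureTheory.volume.withDensity
    fun x => ENNReal.ofReal ((1 / (2 * b)) * Real.exp (-|x - μ| / b))

/-! The characteristic function of `Lap(μ, b)` is `exp (i t μ) / (1 + b² t²)`. The partial fraction
decomposition of `1 / ((1 + b₁² t²) (1 + b₂² t²))` therefore exhibits the law of a sum of two
independent Laplace variables of distinct scales as a signed mixture of two Laplace laws, so that
its tails are read off from those of the Laplace distribution. This is applied to `X₁ - a X₂`, whose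
location `μ₁ - a μ₂` is nonpositive, on the half-line `(-∞, 0)`. -/

open scoped NNReal

theorem integral_cexp_mul_sub_mul_abs {c z : ℂ} (hz : |z.re| < c.re) :
    ∫ x : ℝ, Complex.exp (z * x - c * |x|) = 2 * c / (c ^ 2 - z ^ 2) := by
  obtain ⟨hneg, hpos⟩ := abs_lt.mp hz
  have hadd : 0 < (z + c).re := by simp only [Complex.add_re]; linarith
  have hsub : (z - c).re < 0 := by simp only [Complex.sub_re]; linarith
  have hadd_ne : z + c ≠ 0 := fun h => by simp [h] at hadd
  have hsub_ne : z - c ≠ 0 := fun h => by simp [h] at hsub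
  have hIic : Set.EqOn (fun x : ℝ => Complex.exp ((z + c) * x))
      (fun x : ℝ => Complex.exp (z * x - c * |x|)) (Set.Iic 0) := fun x hx => by
    simp only [abs_of_nonpos (Set.mem_Iic.mp hx), Complex.ofReal_neg]
    ring_nf
  have hIoi : Set.EqOn (fun x : ℝ => Complex.exp ((z - c) * x))
      (fun x : ℝ => Complex.exp (z * x - c * |x|)) (Set.Ioi 0) := fun x hx => by
    simp only [abs_of_pos (Set.mem_Ioi.mp hx)]
    ring_nf
  rw [← intervalIntegral.integral_Iic_add_Ioi
      ((integrableOn_exp_mul_complex_Iic hadd 0).congr_fun hIic measurableSet_Iic)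
      ((integrableOn_exp_mul_complex_Ioi hsub 0).congr_fun hIoi measurableSet_Ioi),
    ← setIntegral_congr_fun measurableSet_Iic hIic, ← setIntegral_congr_fun measurableSet_Ioi hIoi,
    integral_exp_mul_complex_Iic hadd, integral_exp_mul_complex_Ioi hsub]
  have hfactor : c ^ 2 - z ^ 2 = -((z + c) * (z - c)) := by ring
  simp only [hfactor, Complex.ofReal_zero, mul_zero, Complex.exp_zero]
  field_simp
  ring

section LaplaceMeasure

variable {b : ℝ}

theorem integral_laplaceMeasure {E : Type*} [NormedAddCommGroup E] [NormedSpace ℝ E]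
    (hb : 0 ≤ b) (μ : ℝ) (f : ℝ → E) :
    ∫ x, f x ∂laplaceMeasure μ b =
      ∫ x, (1 / (2 * b) * Real.exp (-|x - μ| / b)) • f x := by
  rw [laplaceMeasure, integral_withDensity_eq_integral_toReal_smul (by fun_prop)
    (ae_of_all _ fun _ => ENNReal.ofReal_lt_top)]
  have hdensity (x : ℝ) : 0 ≤ 1 / (2 * b) * Real.exp (-|x - μ| / b) := by positivity
  simp only [ENNReal.toReal_ofReal (hdensity _)]

theorem charFun_laplaceMeasure (hb : 0 < b) (μ t : ℝ) :
    charFun (laplaceMeasure μ b) t =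
      Complex.exp (t * μ * Complex.I) / (1 + b ^ 2 * t ^ 2) := by
  have hb' : (b : ℂ) ≠ 0 := by exact_mod_cast hb.ne'
  have hden : (1 + b ^ 2 * t ^ 2 : ℂ) ≠ 0 := by
    exact_mod_cast (show 1 + b ^ 2 * t ^ 2 ≠ 0 by positivity)
  have hstrip : |(t * Complex.I : ℂ).re| < (1 / b : ℂ).re := by
    rw [← Complex.ofReal_one, ← Complex.ofReal_div]
    simpa using hb
  calc charFun (laplaceMeasure μ b) t
      = ∫ x : ℝ, (1 / (2 * b) * Real.exp (-|x - μ| / b)) • Complex.exp (t * x * Complex.I) := by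
        rw [charFun_apply_real, integral_laplaceMeasure hb.le]
    _ = ∫ x : ℝ, (1 / (2 * b) * Real.exp (-|x| / b)) •
          Complex.exp (t * (x + μ : ℝ) * Complex.I) := by
        rw [← integral_add_right_eq_self _ μ]
        simp only [add_sub_cancel_right]
    _ = ∫ x : ℝ, 1 / (2 * b) * Complex.exp (t * μ * Complex.I) *
          Complex.exp (t * Complex.I * x - 1 / b * |x|) := by
        congr with x
        rw [Complex.real_smul, mul_assoc (1 / (2 * b) : ℂ), ← Complex.exp_add]
        push_cast
        rw [mul_assoc, ← Complex.exp_add]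
        ring_nf
    _ = Complex.exp (t * μ * Complex.I) / (1 + b ^ 2 * t ^ 2) := by
        rw [integral_const_mul, integral_cexp_mul_sub_mul_abs hstrip, mul_pow, Complex.I_sq]
        have : (1 / b : ℂ) ^ 2 - t ^ 2 * -1 = (1 + b ^ 2 * t ^ 2) / b ^ 2 := by
          field_simp
          ring
        rw [this]
        field_simp

theorem isProbabilityMeasure_laplaceMeasure (hb : 0 < b) (μ : ℝ) :
    IsProbabilityMeasure (laplaceMeasure μ b) := by
  have hmass : (laplaceMeasure μ b).real Set.univ = 1 := by
    have := charFun_laplaceMeasure hb μ 0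
    simpa [charFun_zero] using this
  exact ⟨(ENNReal.toReal_eq_one_iff _).mp hmass⟩

theorem laplaceMeasure_map_const_mul (hb : 0 < b) (μ : ℝ) {c : ℝ} (hc : c ≠ 0) :
    (laplaceMeasure μ b).map (c * ·) = laplaceMeasure (c * μ) (|c| * b) := by
  have := isProbabilityMeasure_laplaceMeasure hb μ
  have hcb : 0 < |c| * b := by positivity
  have := isProbabilityMeasure_laplaceMeasure hcb (c * μ)
  refine Measure.ext_of_charFun (funext fun t => ?_)
  have hsq : ((|c| : ℝ) : ℂ) ^ 2 = c ^ 2 := by exact_mod_cast sq_abs c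
  rw [charFun_map_mul, charFun_laplaceMeasure hb, charFun_laplaceMeasure hcb]
  push_cast
  simp only [mul_pow, hsq]
  ring_nf

theorem laplaceMeasure_real_Ici (hb : 0 < b) {μ t : ℝ} (ht : μ ≤ t) :
    (laplaceMeasure μ b).real (Set.Ici t) = Real.exp ((μ - t) / b) / 2 := by
  have hdensity : Set.EqOn (fun x => 1 / (2 * b) * Real.exp (-|x - μ| / b))
      (fun x => 1 / (2 * b) * Real.exp (μ / b) * Real.exp (-(1 / b) * x)) (Set.Ici t) :=
    fun x hx => by
      simp only [abs_of_nonneg (sub_nonneg.mpr (ht.trans (Set.mem_Ici.mp hx))), mul_assoc,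
        ← Real.exp_add]
      ring_nf
  calc (laplaceMeasure μ b).real (Set.Ici t)
      = ∫ x in Set.Ici t, 1 / (2 * b) * Real.exp (-|x - μ| / b) := by
        rw [measureReal_def, laplaceMeasure, withDensity_apply _ measurableSet_Ici,
          integral_eq_lintegral_of_nonneg_ae (ae_of_all _ fun x => by positivity)
            (by fun_prop)]
    _ = 1 / (2 * b) * Real.exp (μ / b) * (-Real.exp (-(1 / b) * t) / -(1 / b)) := by
        rw [setIntegral_congr_fun measurableSet_Ici hdensity, integral_const_mul,
          integral_Ici_eq_integral_Ioi, integral_exp_mul_Ioi (by simpa using hb)]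
    _ = Real.exp (μ / b) * Real.exp (-(1 / b) * t) / 2 := by field_simp
    _ = Real.exp ((μ - t) / b) / 2 := by
        rw [← Real.exp_add]
        ring_nf

theorem laplaceMeasure_real_Iio (hb : 0 < b) {μ t : ℝ} (ht : μ ≤ t) :
    (laplaceMeasure μ b).real (Set.Iio t) = 1 - Real.exp ((μ - t) / b) / 2 := by
  have := isProbabilityMeasure_laplaceMeasure hb μ
  rw [← Set.compl_Ici, probReal_compl_eq_one_sub measurableSet_Ici, laplaceMeasure_real_Ici hb ht]

end LaplaceMeasure

section CharFun

variable {E : Type*} [MeasurableSpace E]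

theorem charFun_add_measure [SeminormedAddCommGroup E] [InnerProductSpace ℝ E]
    [OpensMeasurableSpace E] (ν₁ ν₂ : Measure E) [IsFiniteMeasure ν₁] [IsFiniteMeasure ν₂] (t : E) :
    charFun (ν₁ + ν₂) t = charFun ν₁ t + charFun ν₂ t := by
  simp only [charFun_eq_integral_innerProbChar]
  exact integral_add_measure (BoundedContinuousFunction.integrable _ _)
    (BoundedContinuousFunction.integrable _ _)

theorem charFun_nnreal_smul_measure [Inner ℝ E] (c : ℝ≥0) (ν : Measure E) (t : E) :
    charFun (c • ν) t = c * charFun ν t := by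
  simp only [charFun_apply, integral_smul_nnreal_measure, NNReal.smul_def, Complex.real_smul]

end CharFun

section Convolution

variable {b₁ b₂ : ℝ}

/- The negative terms of the partial fraction identity are moved across, so that this is an
equality of (positive) measures. -/
theorem sq_smul_laplaceMeasure_conv_add (hb₁ : 0 < b₁) (hb₂ : 0 < b₂) (μ₁ μ₂ : ℝ) :
    (b₁ ^ 2).toNNReal • (laplaceMeasure μ₁ b₁ ∗ laplaceMeasure μ₂ b₂) +
        (b₂ ^ 2).toNNReal • laplaceMeasure (μ₁ + μ₂) b₂ =
      (b₂ ^ 2).toNNReal • (laplaceMeasure μ₁ b₁ ∗ laplaceMeasure μ₂ b₂) +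
        (b₁ ^ 2).toNNReal • laplaceMeasure (μ₁ + μ₂) b₁ := by
  have (μ : ℝ) := isProbabilityMeasure_laplaceMeasure hb₁ μ
  have (μ : ℝ) := isProbabilityMeasure_laplaceMeasure hb₂ μ
  refine Measure.ext_of_charFun (funext fun t => ?_)
  have hden₁ : (1 + b₁ ^ 2 * t ^ 2 : ℂ) ≠ 0 := by
    exact_mod_cast (show 1 + b₁ ^ 2 * t ^ 2 ≠ 0 by positivity)
  have hden₂ : (1 + b₂ ^ 2 * t ^ 2 : ℂ) ≠ 0 := by
    exact_mod_cast (show 1 + b₂ ^ 2 * t ^ 2 ≠ 0 by positivity)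
  have hexp : Complex.exp (t * (μ₁ + μ₂ : ℝ) * Complex.I) =
      Complex.exp (t * μ₁ * Complex.I) * Complex.exp (t * μ₂ * Complex.I) := by
    rw [← Complex.exp_add]
    push_cast
    ring_nf
  simp only [charFun_add_measure, charFun_nnreal_smul_measure, charFun_conv,
    charFun_laplaceMeasure hb₁, charFun_laplaceMeasure hb₂, hexp,
    Real.coe_toNNReal _ (sq_nonneg _), Complex.ofReal_pow]
  have hfrac : (b₁ ^ 2 + b₂ ^ 2 * (1 + b₁ ^ 2 * t ^ 2) : ℂ) =
      b₂ ^ 2 + b₁ ^ 2 * (1 + b₂ ^ 2 * t ^ 2) := by ring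
  generalize (1 + b₁ ^ 2 * t ^ 2 : ℂ) = d₁ at *
  generalize (1 + b₂ ^ 2 * t ^ 2 : ℂ) = d₂ at *
  field_simp
  linear_combination hfrac

theorem laplaceMeasure_conv_real (hb₁ : 0 < b₁) (hb₂ : 0 < b₂) (hne : b₁ ≠ b₂) (μ₁ μ₂ : ℝ)
    (s : Set ℝ) :
    (laplaceMeasure μ₁ b₁ ∗ laplaceMeasure μ₂ b₂).real s =
      (b₁ ^ 2 * (laplaceMeasure (μ₁ + μ₂) b₁).real s -
        b₂ ^ 2 * (laplaceMeasure (μ₁ + μ₂) b₂).real s) / (b₁ ^ 2 - b₂ ^ 2) := by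
  have (μ : ℝ) := isProbabilityMeasure_laplaceMeasure hb₁ μ
  have (μ : ℝ) := isProbabilityMeasure_laplaceMeasure hb₂ μ
  have hsq : b₁ ^ 2 - b₂ ^ 2 ≠ 0 :=
    sub_ne_zero.mpr ((pow_left_inj₀ hb₁.le hb₂.le two_ne_zero).not.mpr hne)
  have hmix := congrArg (fun ν : Measure ℝ => ν.real s)
    (sq_smul_laplaceMeasure_conv_add hb₁ hb₂ μ₁ μ₂)
  beta_reduce at hmix
  rw [measureReal_add_apply, measureReal_add_apply] at hmix
  simp only [measureReal_nnreal_smul_apply, Real.coe_toNNReal _ (sq_nonneg _)] at hmix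
  rw [eq_div_iff hsq]
  linear_combination hmix

theorem laplaceMeasure_conv_real_Iio (hb₁ : 0 < b₁) (hb₂ : 0 < b₂) (hne : b₁ ≠ b₂)
    {μ₁ μ₂ t : ℝ} (ht : μ₁ + μ₂ ≤ t) :
    (laplaceMeasure μ₁ b₁ ∗ laplaceMeasure μ₂ b₂).real (Set.Iio t) =
      1 - (b₁ ^ 2 * Real.exp ((μ₁ + μ₂ - t) / b₁) - b₂ ^ 2 * Real.exp ((μ₁ + μ₂ - t) / b₂)) /
        (2 * (b₁ ^ 2 - b₂ ^ 2)) := by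
  have hsq : b₁ ^ 2 - b₂ ^ 2 ≠ 0 :=
    sub_ne_zero.mpr ((pow_left_inj₀ hb₁.le hb₂.le two_ne_zero).not.mpr hne)
  rw [laplaceMeasure_conv_real hb₁ hb₂ hne, laplaceMeasure_real_Iio hb₁ ht,
    laplaceMeasure_real_Iio hb₂ ht]
  field_simp
  ring

end Convolution

theorem map_sub_const_mul_eq_laplaceMeasure_conv {Ω : Type*} [MeasurableSpace Ω] {P : Measure Ω}
    {X₁ X₂ : Ω → ℝ} (hm₁ : AEMeasurable X₁ P) (hm₂ : AEMeasurable X₂ P)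
    (hindep : IndepFun X₁ X₂ P) {μ₁ μ₂ b₁ b₂ a : ℝ} (hb₂ : 0 < b₂) (ha : a ≠ 0)
    (h₁ : P.map X₁ = laplaceMeasure μ₁ b₁) (h₂ : P.map X₂ = laplaceMeasure μ₂ b₂) :
    P.map (fun ω => X₁ ω - a * X₂ ω) =
      laplaceMeasure μ₁ b₁ ∗ laplaceMeasure (-(a * μ₂)) (|a| * b₂) := by
  have hscaled : P.map (fun ω => -a * X₂ ω) = laplaceMeasure (-(a * μ₂)) (|a| * b₂) := by
    rw [← Function.comp_def (-a * ·) X₂, ← AEMeasurable.map_map_of_aemeasurable (by fun_prop) hm₂,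
      h₂, laplaceMeasure_map_const_mul hb₂ μ₂ (neg_ne_zero.mpr ha), abs_neg, neg_mul]
  have hindep' : IndepFun X₁ (fun ω => -a * X₂ ω) P :=
    hindep.comp measurable_id (measurable_const_mul (-a))
  have hσ₁ : SigmaFinite (P.map X₁) := h₁ ▸ SigmaFinite.withDensity_ofReal _
  have hσ₂ : SigmaFinite (P.map fun ω => -a * X₂ ω) := hscaled ▸ SigmaFinite.withDensity_ofReal _
  rw [← h₁, ← hscaled, ← hindep'.map_add_eq_map_conv_map₀' hm₁ (hm₂.const_mul (-a)) hσ₁ hσ₂]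
  congr with ω
  simp only [Pi.add_apply, neg_mul, sub_eq_add_neg]

theorem laplace_ratio_cdf_of_lt_general {Ω : Type*} [MeasurableSpace Ω] {P : Measure Ω}
    {b₁ b₂ μ₁ μ₂ a r : ℝ} (hb₁ : 0 < b₁) (hb₂ : 0 < b₂) (ha : 0 < a)
    (hr : r = a * b₂ / b₁) (hr1 : r ≠ 1) (hle : μ₁ / a ≤ μ₂)
    {X₁ X₂ : Ω → ℝ} (hm₁ : AEMeasurable X₁ P) (hm₂ : AEMeasurable X₂ P)
    (hindep : IndepFun X₁ X₂ P)
    (h₁ : P.map X₁ = laplaceMeasure μ₁ b₁) (h₂ : P.map X₂ = laplaceMeasure μ₂ b₂) :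
    (P {ω | X₁ ω < a * X₂ ω}).toReal =
      1 + Real.exp ((μ₁ / a - μ₂) / b₂) * (r ^ 2 / (2 * (r + 1) * (1 - r))) -
        Real.exp ((μ₁ - a * μ₂) / b₁) * (1 / (2 * (r + 1) * (1 - r))) := by
  have hscale : |a| * b₂ = r * b₁ := by rw [abs_of_pos ha, hr, div_mul_cancel₀ _ hb₁.ne']
  have hr0 : 0 < r := by rw [hr]; positivity
  have hne : b₁ ≠ r * b₁ := fun h => hr1 ((right_eq_mul₀ hb₁.ne').mp h)
  have hloc : μ₁ + -(a * μ₂) ≤ 0 := by linarith [(div_le_iff₀' ha).mp hle]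
  have hm : AEMeasurable (fun ω => X₁ ω - a * X₂ ω) P := hm₁.sub (hm₂.const_mul a)
  have hevent : {ω | X₁ ω < a * X₂ ω} = (fun ω => X₁ ω - a * X₂ ω) ⁻¹' Set.Iio 0 := by
    ext ω
    simp only [Set.mem_ofPred_eq, Set.mem_preimage, Set.mem_Iio, sub_neg]
  have hexp : (μ₁ - a * μ₂) / (r * b₁) = (μ₁ / a - μ₂) / b₂ := by
    rw [← hscale, abs_of_pos ha]
    field_simp
  have h1r : 1 - r ≠ 0 := sub_ne_zero.mpr hr1.symm
  have hsq : b₁ ^ 2 - (r * b₁) ^ 2 = b₁ ^ 2 * ((r + 1) * (1 - r)) := by ring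
  rw [hevent, ← Measure.map_apply_of_aemeasurable hm measurableSet_Iio,
    map_sub_const_mul_eq_laplaceMeasure_conv hm₁ hm₂ hindep hb₂ ha.ne' h₁ h₂, hscale,
    ← measureReal_def, laplaceMeasure_conv_real_Iio hb₁ (by positivity) hne hloc,
    sub_zero, ← sub_eq_add_neg, hexp, hsq]
  field_simp
  ring

/-- CDF of a ratio of two independent Laplace random variables, case `μ₁/a < μ₂`. -/
theorem laplace_ratio_cdf_of_lt {Ω : Type*} [MeasurableSpace Ω]
    (P : Measure Ω) [IsProbabilityMeasure P]
    (b μ₁ μ₂ a : ℝ) (hb : 0 < b) (hμ₁ : 0 < μ₁) (hμ₂ : 0 < μ₂)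
    (ha : 0 < a) (ha1 : a ≠ 1) (hlt : μ₁ / a < μ₂)
    (X₁ X₂ : Ω → ℝ) (hm₁ : Measurable X₁) (hm₂ : Measurable X₂)
    (hindep : IndepFun X₁ X₂ P)
    (h₁ : Measure.map X₁ P = laplaceMeasure μ₁ b)
    (h₂ : Measure.map X₂ P = laplaceMeasure μ₂ b) :
    (P {ω | X₁ ω < a * X₂ ω}).toReal =
      1 + Real.exp ((μ₁ / a - μ₂) / b) * (a ^ 2 / (2 * (a + 1) * (1 - a))) -
        Real.exp ((μ₁ - a * μ₂) / b) * (1 / (2 * (a + 1) * (1 - a))) :=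
  laplace_ratio_cdf_of_lt_general hb hb ha (mul_div_cancel_right₀ a hb.ne').symm ha1 hlt.le
    hm₁.aemeasurable hm₂.aemeasurable hindep h₁ h₂
end

section
/- Let p_x, p_y ∈ (0,1) and p = p_x/p_y, and let C > 0. Let n_x(k) and n_y(k) be sequences of positive integers tending to infinity. For each k, let X_k ~ Bin(n_x(k), p_x) and Y_k ~ Bin(n_y(k), p_y), and let L_{x,k}, L_{y,k} be real random variables with mean zero, Var(L_{x,k}) ≤ C·n_x(k) and Var(L_{y,k}) ≤ C·n_y(k), the four variables X_k, Y_k, L_{x,k}, L_{y,k} being mutually independent. Set p̃_{x,k} = (X_k + L_{x,k})/n_x(k), p̃_{y,k} = (Y_k + L_{y,k})/n_y(k), and p̃_k = p̃_{x,k}/p̃_{y,k}. Then p̃_k converges in probability to p as k → ∞. -/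
open MeasureTheory ProbabilityTheory Filter

/-- The binomial distribution `Bin(n, p)` as a measure on `ℝ`
(the law of the number of successes in `n` independent trials with success probability `p`). -/
noncomputable def binomialReal (n : ℕ) (p : ℝ) (hp : p ≤ 1) : Measure ℝ :=
  ((PMF.binomial (Real.toNNReal p) (Real.toNNReal_le_one.mpr hp) n).toMeasure).map
    (fun i : Fin (n + 1) => ((i : ℕ) : ℝ))

/-!
Chebyshev's inequality turns convergence of means together with vanishing variances into convergence
in probability. The variance of `X_k` is `n p (1 - p)` and that of the noise is `o(n ^ 2)`, so after
division by `n` both variances tend to `0`, whence `X_k / n → p` and `L_k / n → 0`. Addition is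
continuous and division is continuous at `(p_x, p_y)` because `p_y ≠ 0`, so the continuous mapping
theorem gives the limit of the quotient. The binomial mean and variance are the first two moment
identities of the Bernstein polynomials evaluated at `p`.
-/

open Asymptotics
open scoped Topology unitInterval

section ConvergenceInMeasure

variable {Ω ι : Type*} [MeasurableSpace Ω] {P : Measure Ω} {l : Filter ι}

lemma tendsto_measure_lt_dist_of_tendstoInMeasure {E : Type*} [PseudoMetricSpace E]
    {f : ι → Ω → E} {g : Ω → E} (h : TendstoInMeasure P f l g) {δ : ℝ} (hδ : 0 < δ) :
    Tendsto (fun i ↦ P {ω | δ < dist (f i ω) (g ω)}) l (𝓝 0) :=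
  tendsto_of_tendsto_of_tendsto_of_le_of_le tendsto_const_nhds
    (tendstoInMeasure_iff_dist.mp h δ hδ) (fun _ ↦ zero_le)
    fun _ ↦ measure_mono fun _ (hω : δ < _) ↦ hω.le

lemma tendstoInMeasure_prodMk {E F : Type*} [PseudoEMetricSpace E] [PseudoEMetricSpace F]
    {f : ι → Ω → E} {g : ι → Ω → F} {f' : Ω → E} {g' : Ω → F}
    (hf : TendstoInMeasure P f l f') (hg : TendstoInMeasure P g l g') :
    TendstoInMeasure P (fun i ω ↦ (f i ω, g i ω)) l fun ω ↦ (f' ω, g' ω) := by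
  intro ε hε
  have hsum := (hf ε hε).add (hg ε hε)
  rw [add_zero] at hsum
  refine tendsto_of_tendsto_of_tendsto_of_le_of_le tendsto_const_nhds hsum (fun _ ↦ zero_le)
    fun i ↦ (measure_mono fun ω hω ↦ ?_).trans (measure_union_le _ _)
  have hmax : ε ≤ max (edist (f i ω) (f' ω)) (edist (g i ω) (g' ω)) := hω
  exact le_max_iff.mp hmax

lemma tendstoInMeasure_comp_of_continuousAt {E F : Type*} [PseudoEMetricSpace E]
    [PseudoEMetricSpace F] {f : ι → Ω → E} {c : E} {φ : E → F}
    (hf : TendstoInMeasure P f l fun _ ↦ c) (hφ : ContinuousAt φ c) :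
    TendstoInMeasure P (fun i ω ↦ φ (f i ω)) l fun _ ↦ φ c := by
  intro ε hε
  obtain ⟨η, hη, hball⟩ :=
    (Metric.nhds_basis_eball.tendsto_iff Metric.nhds_basis_eball).mp hφ ε hε
  refine tendsto_of_tendsto_of_tendsto_of_le_of_le tendsto_const_nhds (hf η hη)
    (fun _ ↦ zero_le) fun i ↦ measure_mono fun ω (hω : ε ≤ edist (φ (f i ω)) (φ c)) ↦ ?_
  exact not_lt.mp fun hlt ↦ (hball _ (Metric.mem_eball.mpr hlt)).not_ge hω

variable [IsFiniteMeasure P]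

lemma tendstoInMeasure_const_of_tendsto_variance {f : ι → Ω → ℝ} {c : ℝ}
    (hf : ∀ i, MemLp (f i) 2 P) (hmean : Tendsto (fun i ↦ ∫ ω, f i ω ∂P) l (𝓝 c))
    (hvar : Tendsto (fun i ↦ Var[f i; P]) l (𝓝 0)) :
    TendstoInMeasure P f l fun _ ↦ c := by
  refine tendstoInMeasure_iff_dist.mpr fun ε hε ↦ ?_
  have hbound : Tendsto (fun i ↦ ENNReal.ofReal (Var[f i; P] / (ε / 2) ^ 2)) l (𝓝 0) := by
    simpa only [zero_div, ENNReal.ofReal_zero] using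
      ENNReal.tendsto_ofReal (hvar.div_const ((ε / 2) ^ 2))
  have hclose : ∀ᶠ i in l, dist (∫ ω, f i ω ∂P) c < ε / 2 :=
    Metric.tendsto_nhds.mp hmean _ (half_pos hε)
  refine tendsto_of_tendsto_of_tendsto_of_le_of_le' tendsto_const_nhds hbound
    (.of_forall fun _ ↦ zero_le) ?_
  filter_upwards [hclose] with i hi
  refine (measure_mono fun ω (hω : ε ≤ dist (f i ω) c) ↦ ?_).trans
    (meas_ge_le_variance_div_sq (hf i) (half_pos hε))
  have htri := dist_triangle (f i ω) (∫ ω, f i ω ∂P) c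
  change ε / 2 ≤ dist (f i ω) (∫ ω, f i ω ∂P)
  linarith

lemma tendstoInMeasure_div_of_isLittleO_variance {f : ι → Ω → ℝ} {a : ι → ℝ} {c : ℝ}
    (hf : ∀ i, MemLp (f i) 2 P) (hmean : Tendsto (fun i ↦ (∫ ω, f i ω ∂P) / a i) l (𝓝 c))
    (hvar : (fun i ↦ Var[f i; P]) =o[l] fun i ↦ a i ^ 2) :
    TendstoInMeasure P (fun i ω ↦ f i ω / a i) l fun _ ↦ c := by
  refine tendstoInMeasure_const_of_tendsto_variance (fun i ↦ (hf i).mul_const (a i)⁻¹) ?_ ?_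
  · simpa only [integral_div] using hmean
  · simpa only [div_eq_mul_inv, variance_mul_const, inv_pow] using hvar.tendsto_div_nhds_zero

end ConvergenceInMeasure

lemma isLittleO_sq_of_le_const_mul {ι : Type*} {l : Filter ι} {v a : ι → ℝ} {C : ℝ}
    (ha : Tendsto a l atTop) (hv : ∀ i, 0 ≤ v i) (hva : ∀ i, v i ≤ C * a i) :
    v =o[l] fun i ↦ a i ^ 2 := by
  have hO : v =O[l] a := .of_bound C <| by
    filter_upwards [ha.eventually_ge_atTop 0] with i hi
    rw [Real.norm_of_nonneg (hv i), Real.norm_of_nonneg hi]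
    exact hva i
  have ho : (fun x : ℝ ↦ x) =o[atTop] fun x ↦ x ^ 2 := by
    simpa only [pow_one] using isLittleO_pow_pow_atTop_of_lt (𝕜 := ℝ) one_lt_two
  exact hO.trans_isLittleO (ho.comp_tendsto ha)

section BinomialMoments

variable (n : ℕ) (p : I)

lemma integral_map_cast_binomial_eq_sum_bernsteinPolynomial (f : ℝ → ℝ) :
    ∫ x, f x ∂Bin(ℝ, n, p) =
      ∑ k ∈ Finset.range (n + 1), f k * (bernsteinPolynomial ℝ n k).eval (p : ℝ) := by
  rw [integral_map_cast_binomial, Nat.range_succ_eq_Iic]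
  refine Finset.sum_congr rfl fun k _ ↦ ?_
  simp [bernsteinPolynomial, mul_comm]

lemma integral_id_map_cast_binomial : ∫ x, x ∂Bin(ℝ, n, p) = n * p := by
  have h := congrArg (Polynomial.eval (p : ℝ)) (bernsteinPolynomial.sum_smul ℝ n)
  simp only [Polynomial.eval_finsetSum, nsmul_eq_mul, Polynomial.eval_mul, Polynomial.eval_natCast,
    Polynomial.eval_X] at h
  rw [integral_map_cast_binomial_eq_sum_bernsteinPolynomial, h]

lemma variance_id_map_cast_binomial :
    Var[id; Bin(ℝ, n, p)] = n * p * (1 - p) := by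
  have h := congrArg (Polynomial.eval (p : ℝ)) (bernsteinPolynomial.variance ℝ n)
  simp only [Polynomial.eval_finsetSum, nsmul_eq_mul, Polynomial.eval_mul, Polynomial.eval_pow,
    Polynomial.eval_sub, Polynomial.eval_natCast, Polynomial.eval_X, Polynomial.eval_one] at h
  rw [variance_eq_integral aemeasurable_id]
  simp only [id_eq, integral_id_map_cast_binomial]
  rw [integral_map_cast_binomial_eq_sum_bernsteinPolynomial, ← h]
  simp only [sub_sq_comm]

lemma memLp_id_map_cast_binomial : MemLp id 2 Bin(ℝ, n, p) :=
  (memLp_two_iff_integrable_sq aestronglyMeasurable_id).mpr (integrable_map_cast_binomial _)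

end BinomialMoments

lemma binomialReal_eq_map_cast_binomial (n : ℕ) {p : ℝ} (h0 : 0 ≤ p) (hp : p ≤ 1) :
    binomialReal n p hp = Bin(ℝ, n, ⟨p, h0, hp⟩) := by
  have hcast : (fun i : Fin (n + 1) ↦ ((i : ℕ) : ℝ)) = Nat.cast ∘ Fin.val := rfl
  rw [binomialReal, hcast, ← Measure.map_map .of_discrete .of_discrete]
  refine congrArg _ (Measure.ext_of_singleton fun k ↦ ?_)
  rw [Measure.map_apply .of_discrete (measurableSet_singleton k), binomial_singleton]
  rcases le_or_gt k n with hk | hk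
  · have hpre : (Fin.val : Fin (n + 1) → ℕ) ⁻¹' {k} = {⟨k, Nat.lt_succ_of_le hk⟩} := by
      ext i
      simp [Fin.ext_iff]
    have hcompl : (1 : ENNReal) - p.toNNReal = ENNReal.ofReal (1 - p) := by
      rw [ENNReal.ofReal_sub _ h0, ENNReal.ofReal_one, ENNReal.ofReal]
    rw [hpre, PMF.toMeasure_apply_singleton _ _ (measurableSet_singleton _), mul_assoc,
      ENNReal.ofReal_mul (Nat.cast_nonneg _), ENNReal.ofReal_natCast,
      ENNReal.ofReal_mul (pow_nonneg h0 k), ENNReal.ofReal_pow h0,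
      ENNReal.ofReal_pow (sub_nonneg.mpr hp), ← hcompl, mul_comm]
    rfl
  · have hpre : (Fin.val : Fin (n + 1) → ℕ) ⁻¹' {k} = ∅ := by
      ext i
      simp [(Nat.lt_of_lt_of_le i.2 hk).ne]
    simp [hpre, Nat.choose_eq_zero_of_lt hk]

section NoisedProportion

variable {Ω ι : Type*} [MeasurableSpace Ω] {P : Measure Ω} [IsFiniteMeasure P] {l : Filter ι}
  {n : ι → ℕ} {p : I} {X L : ι → Ω → ℝ}

lemma tendstoInMeasure_binomial_div (hn : Tendsto n l atTop)
    (hX : ∀ i, HasLaw (X i) Bin(ℝ, n i, p) P) :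
    TendstoInMeasure P (fun i ω ↦ X i ω / n i) l fun _ ↦ (p : ℝ) := by
  have hmean (i : ι) : ∫ ω, X i ω ∂P = n i * p :=
    (hX i).integral_eq.trans (integral_id_map_cast_binomial (n i) p)
  have hvar (i : ι) : Var[X i; P] = n i * p * (1 - p) :=
    (hX i).variance_eq.trans (variance_id_map_cast_binomial (n i) p)
  refine tendstoInMeasure_div_of_isLittleO_variance (fun i ↦ ?_) ?_ ?_
  · have h := memLp_id_map_cast_binomial (n i) p
    rw [← (hX i).map_eq] at h
    exact (memLp_map_measure_iff aestronglyMeasurable_id (hX i).aemeasurable).mp h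
  · refine tendsto_const_nhds.congr' ?_
    filter_upwards [hn.eventually_gt_atTop 0] with i hi
    rw [hmean, mul_div_cancel_left₀ _ (Nat.cast_ne_zero.mpr hi.ne')]
  · refine isLittleO_sq_of_le_const_mul (tendsto_natCast_atTop_atTop.comp hn)
      (fun i ↦ variance_nonneg _ _) (C := p * (1 - p)) fun i ↦ ?_
    rw [hvar, mul_assoc, mul_comm]

lemma tendstoInMeasure_noised_binomial_div (hn : Tendsto n l atTop)
    (hX : ∀ i, HasLaw (X i) Bin(ℝ, n i, p) P) (hL : ∀ i, MemLp (L i) 2 P)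
    (hmean : (fun i ↦ ∫ ω, L i ω ∂P) =o[l] fun i ↦ (n i : ℝ))
    (hvar : (fun i ↦ Var[L i; P]) =o[l] fun i ↦ (n i : ℝ) ^ 2) :
    TendstoInMeasure P (fun i ω ↦ (X i ω + L i ω) / n i) l fun _ ↦ (p : ℝ) := by
  have hsignal := tendstoInMeasure_binomial_div hn hX
  have hnoise : TendstoInMeasure P (fun i ω ↦ L i ω / n i) l fun _ ↦ 0 :=
    tendstoInMeasure_div_of_isLittleO_variance hL hmean.tendsto_div_nhds_zero hvar
  simpa only [add_div, add_zero] using tendstoInMeasure_comp_of_continuousAt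
    (tendstoInMeasure_prodMk hsignal hnoise) continuous_add.continuousAt

end NoisedProportion

theorem noised_relative_risk_consistent_general {Ω ι : Type*} [MeasurableSpace Ω]
    {P : Measure Ω} [IsFiniteMeasure P] {l : Filter ι} {px py : I} (hpy : (py : ℝ) ≠ 0)
    {nx ny : ι → ℕ} (hnx : Tendsto nx l atTop) (hny : Tendsto ny l atTop)
    {X Y Lx Ly : ι → Ω → ℝ}
    (hX : ∀ i, HasLaw (X i) Bin(ℝ, nx i, px) P) (hY : ∀ i, HasLaw (Y i) Bin(ℝ, ny i, py) P)
    (hLx : ∀ i, MemLp (Lx i) 2 P) (hLy : ∀ i, MemLp (Ly i) 2 P)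
    (hLxMean : (fun i ↦ ∫ ω, Lx i ω ∂P) =o[l] fun i ↦ (nx i : ℝ))
    (hLyMean : (fun i ↦ ∫ ω, Ly i ω ∂P) =o[l] fun i ↦ (ny i : ℝ))
    (hLxVar : (fun i ↦ Var[Lx i; P]) =o[l] fun i ↦ (nx i : ℝ) ^ 2)
    (hLyVar : (fun i ↦ Var[Ly i; P]) =o[l] fun i ↦ (ny i : ℝ) ^ 2) :
    TendstoInMeasure P
      (fun i ω ↦ ((X i ω + Lx i ω) / (nx i : ℝ)) / ((Y i ω + Ly i ω) / (ny i : ℝ))) l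
      fun _ ↦ (px : ℝ) / py := by
  have hx := tendstoInMeasure_noised_binomial_div hnx hX hLx hLxMean hLxVar
  have hy := tendstoInMeasure_noised_binomial_div hny hY hLy hLyMean hLyVar
  have hdiv : ContinuousAt (fun q : ℝ × ℝ ↦ q.1 / q.2) ((px : ℝ), (py : ℝ)) :=
    continuousAt_fst.div continuousAt_snd hpy
  exact (tendstoInMeasure_comp_of_continuousAt (tendstoInMeasure_prodMk hx hy) hdiv :)

/-- **Consistency of the noised relative-risk estimator.**  With `X_k ~ Bin(n_x k, p_x)`,
`Y_k ~ Bin(n_y k, p_y)`, zero-mean noises `L_{x,k}, L_{y,k}` with variances `O(n_x k)` and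
`O(n_y k)`, all four mutually independent, the noised relative-risk estimator
`p̃_k = ((X_k + L_{x,k})/n_x k) / ((Y_k + L_{y,k})/n_y k)` converges in probability
to `p = p_x / p_y`. -/
theorem noised_relative_risk_consistent {Ω : Type*} [MeasurableSpace Ω]
    (P : Measure Ω) [IsProbabilityMeasure P]
    (px py C : ℝ) (hpx : px ∈ Set.Ioo (0 : ℝ) 1) (hpy : py ∈ Set.Ioo (0 : ℝ) 1) (hC : 0 < C)
    (nx ny : ℕ → ℕ) (hnx : ∀ k, 0 < nx k) (hny : ∀ k, 0 < ny k)
    (hnxTop : Tendsto nx atTop atTop) (hnyTop : Tendsto ny atTop atTop)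
    (X Y Lx Ly : ℕ → Ω → ℝ)
    (hmX : ∀ k, Measurable (X k)) (hmY : ∀ k, Measurable (Y k))
    (hmLx : ∀ k, Measurable (Lx k)) (hmLy : ∀ k, Measurable (Ly k))
    (hlawX : ∀ k, Measure.map (X k) P = binomialReal (nx k) px hpx.2.le)
    (hlawY : ∀ k, Measure.map (Y k) P = binomialReal (ny k) py hpy.2.le)
    (hLx2 : ∀ k, MemLp (Lx k) 2 P) (hLy2 : ∀ k, MemLp (Ly k) 2 P)
    (hLxMean : ∀ k, ∫ ω, Lx k ω ∂P = 0) (hLyMean : ∀ k, ∫ ω, Ly k ω ∂P = 0)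
    (hLxVar : ∀ k, variance (Lx k) P ≤ C * (nx k : ℝ))
    (hLyVar : ∀ k, variance (Ly k) P ≤ C * (ny k : ℝ))
    (hindep : ∀ k, iIndepFun ![X k, Y k, Lx k, Ly k] P) :
    ∀ δ : ℝ, 0 < δ →
      Tendsto
        (fun k => P {ω |
          δ < |((X k ω + Lx k ω) / (nx k : ℝ)) / ((Y k ω + Ly k ω) / (ny k : ℝ)) - px / py|})
        atTop (nhds 0) := by
  have hnxReal := tendsto_natCast_atTop_atTop (R := ℝ).comp hnxTop
  have hnyReal := tendsto_natCast_atTop_atTop (R := ℝ).comp hnyTop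
  exact fun _ ↦ tendsto_measure_lt_dist_of_tendstoInMeasure <|
    noised_relative_risk_consistent_general hpy.1.ne' hnxTop hnyTop
      (fun k ↦ ⟨(hmX k).aemeasurable,
        (hlawX k).trans (binomialReal_eq_map_cast_binomial (nx k) hpx.1.le hpx.2.le)⟩)
      (fun k ↦ ⟨(hmY k).aemeasurable,
        (hlawY k).trans (binomialReal_eq_map_cast_binomial (ny k) hpy.1.le hpy.2.le)⟩)
      hLx2 hLy2 (by simp only [hLxMean, isLittleO_zero]) (by simp only [hLyMean, isLittleO_zero])
      (isLittleO_sq_of_le_const_mul hnxReal (fun _ ↦ variance_nonneg _ _) hLxVar)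
      (isLittleO_sq_of_le_const_mul hnyReal (fun _ ↦ variance_nonneg _ _) hLyVar)
end

section
/- Let p_x, p_y ∈ (0,1), p = p_x/p_y, ε > 0, α ∈ (0,1), and z = Φ⁻¹(1 − α/2). Let n_x(k) and n_y(k) be sequences of positive integers tending to infinity. For each k, let X_k ~ Bin(n_x(k), p_x) and Y_k ~ Bin(n_y(k), p_y), and let L_{x,k}, L_{y,k} ~ Lap(2/ε), the four variables being mutually independent. Set X̃_k = X_k + L_{x,k}, Ỹ_k = Y_k + L_{y,k}, p̃_k = (X̃_k/n_x(k))/(Ỹ_k/n_y(k)), and Ṽ_k = p̃_k · √(1/X̃_k − 1/n_x(k) + 1/Ỹ_k − 1/n_y(k)). Then P(|p̃_k − p| ≤ z·Ṽ_k) → 1 − α as k → ∞; that is, the normal-approximation confidence interval built from Laplace-mechanism-noised counts is asymptotically valid. -/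
open MeasureTheory ProbabilityTheory Filter

/-!
Write `u`, `v` for the standardized noisy counts and `A`, `B` for the noisy counts divided by their
binomial means `n p`, `m q`. The Laplace noise has a fixed law, hence is `o(√n)` in probability, so
by the central limit theorem and independence `(u, v)` converges in distribution to a pair `(Z, W)`
of independent standard normals, while `A` and `B` converge to `1`.

Clearing denominators, coverage becomes `coveragePivot ≤ 0`, where the pivot is a continuous
function of `u, v, A, B` and of the unit vector `(a, b)` along the pair of relative standard
deviations of the two counts. This vector need not converge, because `n / m` need not. However, in
the limit `A = B = 1` the pivot is `|a Z - b W| - z`, whose law is the same for every unit vector;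
compactness of the circle then gives convergence along every subsequence to the same limit, and the
coverage tends to `P(|Z| ≤ z) = 1 - α`.
-/

open scoped NNReal Topology

section Convergence

variable {ι Ω Ω' E F : Type*} {mΩ : MeasurableSpace Ω} {mΩ' : MeasurableSpace Ω'}
  {P : Measure Ω} {P' : Measure Ω'} {l : Filter ι}

lemma tendstoInMeasure_of_tendsto [PseudoMetricSpace E] {c : ι → E} {c₀ : E}
    (hc : Tendsto c l (𝓝 c₀)) : TendstoInMeasure P (fun i _ ↦ c i) l (fun _ ↦ c₀) := by
  refine tendstoInMeasure_iff_dist.2 fun ε hε ↦ tendsto_const_nhds.congr' ?_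
  filter_upwards [Metric.tendsto_nhds.1 hc ε hε] with i hi
  simp [hi.not_ge]

lemma tendsto_measureReal_of_mem_iff_of_notMem [IsFiniteMeasure P] {A A' B : ι → Set Ω} {c : ℝ}
    (hA' : Tendsto (fun i ↦ P.real (A' i)) l (𝓝 c)) (hB : Tendsto (fun i ↦ P.real (B i)) l (𝓝 0))
    (h : ∀ᶠ i in l, ∀ ω ∉ B i, ω ∈ A i ↔ ω ∈ A' i) :
    Tendsto (fun i ↦ P.real (A i)) l (𝓝 c) := by
  have lower : Tendsto (fun i ↦ P.real (A' i) - P.real (B i)) l (𝓝 c) := by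
    simpa using hA'.sub hB
  have upper : Tendsto (fun i ↦ P.real (A' i) + P.real (B i)) l (𝓝 c) := by
    simpa using hA'.add hB
  refine tendsto_of_tendsto_of_tendsto_of_le_of_le' lower upper ?_ ?_ <;>
    filter_upwards [h] with i hi
  · have hsub : A' i ⊆ A i ∪ B i := by grind
    linarith [measureReal_mono hsub (μ := P), measureReal_union_le (μ := P) (A i) (B i)]
  · have hsub : A i ⊆ A' i ∪ B i := by grind
    linarith [measureReal_mono hsub (μ := P), measureReal_union_le (μ := P) (A' i) (B i)]

variable [IsProbabilityMeasure P] [IsProbabilityMeasure P']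

lemma tendsto_measureReal_of_null_frontier [TopologicalSpace E] [HasOuterApproxClosed E]
    [MeasurableSpace E] [OpensMeasurableSpace E] {X : ι → Ω → E} {Z : Ω' → E}
    (h : TendstoInDistribution X l Z (fun _ ↦ P) P') {A : Set E} (hA : MeasurableSet A)
    (hfr : P'.map Z (frontier A) = 0) :
    Tendsto (fun i ↦ P.real {ω | X i ω ∈ A}) l (𝓝 (P'.real {ω | Z ω ∈ A})) := by
  have := Measure.isProbabilityMeasure_map h.aemeasurable_limit
  have key := (ENNReal.tendsto_toReal (measure_ne_top (P'.map Z) A)).comp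
    (ProbabilityMeasure.tendsto_measure_of_null_frontier_of_tendsto' h.tendsto hfr)
  simp only [Function.comp_def, ProbabilityMeasure.coe_mk, Measure.map_apply_of_aemeasurable
    (h.forall_aemeasurable _) hA, Measure.map_apply_of_aemeasurable h.aemeasurable_limit hA]
    at key
  exact key

lemma tendsto_measureReal_mem_of_notMem_of_isClosed [PseudoMetricSpace E] [MeasurableSpace E]
    [OpensMeasurableSpace E] {X : ι → Ω → E} {c : E}
    (h : TendstoInDistribution X l (fun _ ↦ c) (fun _ ↦ P) P') {A : Set E} (hA : IsClosed A)
    (hc : c ∉ A) : Tendsto (fun i ↦ P.real {ω | X i ω ∈ A}) l (𝓝 0) := by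
  have hfr : c ∉ frontier A := fun hmem ↦ hc (hA.frontier_subset hmem)
  simpa [hc] using tendsto_measureReal_of_null_frontier h hA.measurableSet
    (by simp [hfr, measurableSet_frontier])

lemma tendstoInMeasure_const_of_tendstoInDistribution [PseudoMetricSpace E] [MeasurableSpace E]
    [OpensMeasurableSpace E] {X : ι → Ω → E} {c : E}
    (h : TendstoInDistribution X l (fun _ ↦ c) (fun _ ↦ P) P') :
    TendstoInMeasure P X l (fun _ ↦ c) :=
  tendstoInMeasure_iff_measureReal_dist.2 fun ε hε ↦
    tendsto_measureReal_mem_of_notMem_of_isClosed h (A := {x | ε ≤ dist x c})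
      (isClosed_le (by fun_prop) (by fun_prop)) (by simpa)

variable [l.IsCountablyGenerated]
  [NormedAddCommGroup E] [MeasurableSpace E] [BorelSpace E] [SecondCountableTopology E]
  {S : Type*} [NormedAddCommGroup S] [MeasurableSpace S] [BorelSpace S] [SecondCountableTopology S]
  [TopologicalSpace F] [MeasurableSpace F] [BorelSpace F]

lemma tendstoInDistribution_comp_prodMk_of_tendsto {X : ι → Ω → E} {Z : Ω' → E}
    (hX : TendstoInDistribution X l Z (fun _ ↦ P) P') {g : E × S → F} (hg : Continuous g)
    {s : ι → S} {s₀ : S} (hs : Tendsto s l (𝓝 s₀)) :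
    TendstoInDistribution (fun i ω ↦ g (X i ω, s i)) l (fun ω ↦ g (Z ω, s₀)) (fun _ ↦ P) P' :=
  hX.continuous_comp_prodMk_of_tendstoInMeasure_const hg (tendstoInMeasure_of_tendsto hs)
    fun _ ↦ aemeasurable_const

lemma tendstoInDistribution_comp_prodMk_of_isCompact {Ω'' : Type*} {mΩ'' : MeasurableSpace Ω''}
    {P'' : Measure Ω''} [IsProbabilityMeasure P''] {X : ι → Ω → E} {Z : Ω' → E} {T : Ω'' → F}
    (hX : TendstoInDistribution X l Z (fun _ ↦ P) P') {g : E × S → F} (hg : Continuous g)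
    {K : Set S} (hK : IsCompact K) {s : ι → S} (hs : ∀ᶠ i in l, s i ∈ K) (hTm : AEMeasurable T P'')
    (hT : ∀ t ∈ K, P'.map (fun ω ↦ g (Z ω, t)) = P''.map T) :
    TendstoInDistribution (fun i ω ↦ g (X i ω, s i)) l T (fun _ ↦ P) P'' where
  forall_aemeasurable i := by
    have := hX.forall_aemeasurable i
    have := hg.measurable
    fun_prop
  aemeasurable_limit := hTm
  tendsto := by
    refine tendsto_of_subseq_tendsto fun u hu ↦ ?_
    obtain ⟨t, htK, φ, hφ, hφt⟩ := hK.tendsto_subseq' (hu.eventually hs).frequently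
    have hX' : TendstoInDistribution (fun n ↦ X (u (φ n))) atTop Z (fun _ ↦ P) P' :=
      { forall_aemeasurable n := hX.forall_aemeasurable _
        aemeasurable_limit := hX.aemeasurable_limit
        tendsto := hX.tendsto.comp (hu.comp hφ.tendsto_atTop) }
    have hlim := (tendstoInDistribution_comp_prodMk_of_tendsto hX' hg hφt).tendsto
    simp only [hT t htK] at hlim
    exact ⟨φ, hlim⟩

lemma tendstoInMeasure_smul_of_identDistrib [NormedSpace ℝ E] {X : ι → Ω → E} (i₀ : ι)
    (hX : ∀ i, IdentDistrib (X i₀) (X i) P P) {c : ι → ℝ} (hc : Tendsto c l (𝓝 0)) :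
    TendstoInMeasure P (fun i ω ↦ c i • X i ω) l fun _ ↦ 0 := by
  have hX' : TendstoInDistribution X l (X i₀) (fun _ ↦ P) P :=
    tendstoInDistribution_of_identDistrib i₀ hX (.refl (hX i₀).aemeasurable_fst)
  have hcX := tendstoInDistribution_comp_prodMk_of_tendsto hX'
    (g := fun x : E × ℝ ↦ x.2 • x.1) (by fun_prop) hc
  simp only [zero_smul] at hcX
  exact tendstoInMeasure_const_of_tendstoInDistribution hcX

lemma tendstoInMeasure_inv_sqrt_natCast_smul_of_identDistrib [NormedSpace ℝ E] {n : ι → ℕ}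
    (hn : Tendsto n l atTop) {X : ι → Ω → E} (i₀ : ι) (hX : ∀ i, IdentDistrib (X i₀) (X i) P P) :
    TendstoInMeasure P (fun i ω ↦ (√(n i))⁻¹ • X i ω) l fun _ ↦ 0 :=
  tendstoInMeasure_smul_of_identDistrib i₀ hX <|
    (Real.tendsto_sqrt_atTop.comp (tendsto_natCast_atTop_atTop.comp hn)).inv_tendsto_atTop

end Convergence

section IndependentPair

variable {ι Ω Ω' E F : Type*} {mΩ : MeasurableSpace Ω} {mΩ' : MeasurableSpace Ω'}
  {P : Measure Ω} {P' : Measure Ω'} [IsProbabilityMeasure P] [IsProbabilityMeasure P']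
  {l : Filter ι}
  [PseudoMetricSpace E] [MeasurableSpace E] [BorelSpace E] [SecondCountableTopology E]
  [PseudoMetricSpace F] [MeasurableSpace F] [BorelSpace F] [SecondCountableTopology F]

lemma tendstoInDistribution_prodMk_of_indepFun {X : ι → Ω → E} {Y : ι → Ω → F} {Z : Ω' → E}
    {W : Ω' → F} (hX : TendstoInDistribution X l Z (fun _ ↦ P) P')
    (hY : TendstoInDistribution Y l W (fun _ ↦ P) P') (hXY : ∀ i, IndepFun (X i) (Y i) P)
    (hZW : IndepFun Z W P') :
    TendstoInDistribution (fun i ω ↦ (X i ω, Y i ω)) l (fun ω ↦ (Z ω, W ω)) (fun _ ↦ P) P' where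
  forall_aemeasurable i := (hX.forall_aemeasurable i).prodMk (hY.forall_aemeasurable i)
  aemeasurable_limit := hX.aemeasurable_limit.prodMk hY.aemeasurable_limit
  tendsto := by
    simp only [fun i ↦ (indepFun_iff_map_prod_eq_prod_map_map (hX.forall_aemeasurable i)
      (hY.forall_aemeasurable i)).1 (hXY i), (indepFun_iff_map_prod_eq_prod_map_map
      hX.aemeasurable_limit hY.aemeasurable_limit).1 hZW]
    exact (ProbabilityMeasure.continuous_prod.tendsto _).comp
      (hX.tendsto.prodMk_nhds hY.tendsto)

end IndependentPair

section CentralLimit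

variable {ι Ω Ω' : Type*} {mΩ : MeasurableSpace Ω} {mΩ' : MeasurableSpace Ω'}
  {P : Measure Ω} {P' : Measure Ω'} {l : Filter ι}

lemma charFun_map_sub_div {X : Ω → ℝ} (hX : AEMeasurable X P) (m s t : ℝ) :
    charFun (P.map fun ω ↦ (X ω - m) / s) t =
      charFun (P.map X) (t / s) * Complex.exp (-(m * (t / s) : ℝ) * Complex.I) := by
  have hmap : P.map (fun ω ↦ (X ω - m) / s) = ((P.map X).map (· + -m)).map (s⁻¹ * ·) := by
    rw [AEMeasurable.map_map_of_aemeasurable (by fun_prop) hX,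
      AEMeasurable.map_map_of_aemeasurable (by fun_prop) (by fun_prop)]
    simp only [Function.comp_def, div_eq_inv_mul, sub_eq_add_neg]
  rw [hmap, charFun_map_mul, charFun_map_add_const, ← div_eq_inv_mul]
  simp [mul_comm]

variable {μ : Measure ℝ}

lemma tendsto_charFun_standardized_pow [IsProbabilityMeasure μ] (hμ : Var[fun x ↦ x; μ] ≠ 0)
    (t : ℝ) :
    Tendsto (fun n : ℕ ↦ charFun (μ.map fun x ↦ (x - ∫ y, y ∂μ) / √Var[fun x ↦ x; μ])
      ((√n)⁻¹ * t) ^ n) atTop (𝓝 (charFun (gaussianReal 0 1) t)) := by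
  have hmean : ∫ x, (x - ∫ y, y ∂μ) / √Var[fun x ↦ x; μ] ∂μ = 0 := by
    have hint : Integrable (fun x ↦ x) μ := memLp_one_iff_integrable.1 <|
      (memLp_two_of_variance_ne_zero (by fun_prop) hμ).mono_exponent (by simp)
    rw [integral_div, integral_sub hint (by simp)]
    simp
  have hvar : ∫ x, ((x - ∫ y, y ∂μ) / √Var[fun x ↦ x; μ]) ^ 2 ∂μ = 1 := by
    simp only [div_pow]
    rw [integral_div, Real.sq_sqrt (variance_nonneg _ _), ← variance_eq_integral (by fun_prop),
      div_self hμ]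
  simpa [charFun_gaussianReal, neg_div] using
    tendsto_charFun_inv_sqrt_mul_pow (by fun_prop) hmean hvar t

lemma charFun_map_sub_div_sqrt_of_charFun_eq_pow {X : Ω → ℝ} (hXm : AEMeasurable X P) {n : ℕ}
    (hX : ∀ t, charFun (P.map X) t = charFun μ t ^ n) (t : ℝ) :
    charFun (P.map fun ω ↦ (X ω - n * ∫ x, x ∂μ) / √(n * Var[fun x ↦ x; μ])) t =
      charFun (μ.map fun x ↦ (x - ∫ y, y ∂μ) / √Var[fun x ↦ x; μ]) ((√n)⁻¹ * t) ^ n := by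
  have hscale : t / √(n * Var[fun x ↦ x; μ]) = (√n)⁻¹ * t / √Var[fun x ↦ x; μ] := by
    rw [Real.sqrt_mul (Nat.cast_nonneg _)]
    field_simp
  rw [charFun_map_sub_div hXm, charFun_map_sub_div (by fun_prop), hX, mul_pow,
    ← Complex.exp_nat_mul, Measure.map_id', hscale]
  congr 2
  push_cast
  ring

theorem tendstoInDistribution_sub_div_sqrt_of_charFun_eq_pow [IsProbabilityMeasure P]
    [IsProbabilityMeasure P'] [IsProbabilityMeasure μ] [l.IsCountablyGenerated]
    (hμ : Var[fun x ↦ x; μ] ≠ 0)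
    {n : ι → ℕ} (hn : Tendsto n l atTop) {X : ι → Ω → ℝ} (hXm : ∀ i, AEMeasurable (X i) P)
    (hX : ∀ i t, charFun (P.map (X i)) t = charFun μ t ^ n i)
    {Z : Ω' → ℝ} (hZ : HasLaw Z (gaussianReal 0 1) P') :
    TendstoInDistribution (fun i ω ↦ (X i ω - n i * ∫ x, x ∂μ) / √(n i * Var[fun x ↦ x; μ])) l Z
      (fun _ ↦ P) P' where
  forall_aemeasurable i := by fun_prop
  aemeasurable_limit := hZ.aemeasurable
  tendsto := by
    refine tendsto_of_seq_tendsto fun u hu ↦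
      ProbabilityMeasure.tendsto_iff_tendsto_charFun.2 fun t ↦ ?_
    simp only [ProbabilityMeasure.coe_mk, hZ.map_eq]
    exact ((tendsto_charFun_standardized_pow hμ t).comp (hn.comp hu)).congr fun k ↦
      (charFun_map_sub_div_sqrt_of_charFun_eq_pow (hXm (u k)) (hX (u k)) t).symm

end CentralLimit

section Binomial

lemma charFun_binomialReal (n : ℕ) {p : ℝ} (h0 : 0 ≤ p) (hp : p ≤ 1) (t : ℝ) :
    charFun (binomialReal n p hp) t = (1 - p + p * Complex.exp (t * Complex.I)) ^ n := by
  have hfail : (1 - (p.toNNReal : ENNReal)).toReal = 1 - p := by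
    rw [ENNReal.toReal_sub_of_le (by exact_mod_cast Real.toNNReal_le_one.mpr hp) (by simp)]
    simp [h0]
  rw [binomialReal, charFun_apply_real, integral_map (by fun_prop) (by fun_prop),
    PMF.integral_eq_sum, add_comm (1 - p : ℂ), add_pow, Finset.sum_range]
  refine Finset.sum_congr rfl fun i _ ↦ ?_
  simp only [PMF.binomial_apply, ENNReal.toReal_mul, ENNReal.toReal_pow, hfail, Fin.val_last,
    ENNReal.toReal_natCast, ENNReal.coe_toReal, Real.coe_toNNReal p h0, Complex.real_smul]
  push_cast
  rw [mul_pow, ← Complex.exp_nat_mul]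
  ring_nf

lemma charFun_bernoulliMeasure_one_zero (p : unitInterval) (t : ℝ) :
    charFun (bernoulliMeasure (1 : ℝ) 0 p) t = 1 - p + p * Complex.exp (t * Complex.I) := by
  rw [charFun_apply_real, integral_bernoulliMeasure]
  simp
  ring

lemma integral_id_bernoulliMeasure_one_zero (p : unitInterval) :
    ∫ x, x ∂bernoulliMeasure (1 : ℝ) 0 p = p := by
  simp [integral_bernoulliMeasure]

lemma variance_id_bernoulliMeasure_one_zero (p : unitInterval) :
    Var[fun x ↦ x; bernoulliMeasure (1 : ℝ) 0 p] = p * (1 - p) := by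
  rw [variance_eq_integral (by fun_prop), integral_bernoulliMeasure]
  simp [integral_bernoulliMeasure]
  ring

/-- The count `x` out of `n`, centred and scaled by the mean `n p` and the standard deviation
`√(n p (1 - p))` of `Bin(n, p)`. -/
noncomputable def standardizedCount (n : ℕ) (p x : ℝ) : ℝ := (x - n * p) / √(n * (p * (1 - p)))

@[fun_prop]
lemma measurable_standardizedCount (n : ℕ) (p : ℝ) : Measurable (standardizedCount n p) := by
  unfold standardizedCount
  fun_prop

variable {ι Ω Ω' : Type*} {mΩ : MeasurableSpace Ω} {mΩ' : MeasurableSpace Ω'}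
  {P : Measure Ω} {P' : Measure Ω'} [IsProbabilityMeasure P] [IsProbabilityMeasure P']
  {l : Filter ι} [l.IsCountablyGenerated]

theorem tendstoInDistribution_standardizedCount {p : ℝ} (hp : p ∈ Set.Ioo 0 1) {n : ι → ℕ}
    (hn : Tendsto n l atTop) {X : ι → Ω → ℝ}
    (hX : ∀ i, HasLaw (X i) (binomialReal (n i) p hp.2.le) P)
    {Z : Ω' → ℝ} (hZ : HasLaw Z (gaussianReal 0 1) P') :
    TendstoInDistribution (fun i ω ↦ standardizedCount (n i) p (X i ω)) l Z (fun _ ↦ P) P' := by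
  let r : unitInterval := ⟨p, hp.1.le, hp.2.le⟩
  have hvar : Var[fun x ↦ x; bernoulliMeasure (1 : ℝ) 0 r] ≠ 0 := by
    rw [variance_id_bernoulliMeasure_one_zero]
    exact mul_ne_zero hp.1.ne' (sub_pos.2 hp.2).ne'
  have hchar (i : ι) (t : ℝ) :
      charFun (P.map (X i)) t = charFun (bernoulliMeasure (1 : ℝ) 0 r) t ^ n i := by
    rw [(hX i).map_eq, charFun_binomialReal _ hp.1.le, charFun_bernoulliMeasure_one_zero]
  have key := tendstoInDistribution_sub_div_sqrt_of_charFun_eq_pow hvar hn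
    (fun i ↦ (hX i).aemeasurable) hchar hZ
  simp only [variance_id_bernoulliMeasure_one_zero, integral_id_bernoulliMeasure_one_zero] at key
  exact key

end Binomial

section StandardNormal

variable {v : ℝ≥0}

lemma hasLaw_mul_sub_mul_gaussianReal {Ω : Type*} {mΩ : MeasurableSpace Ω} {P : Measure Ω}
    {Z W : Ω → ℝ} (hZ : HasLaw Z (gaussianReal 0 v) P) (hW : HasLaw W (gaussianReal 0 v) P)
    (hZW : IndepFun Z W P) {a b : ℝ} (hab : a ^ 2 + b ^ 2 = 1) :
    HasLaw (fun ω ↦ a * Z ω - b * W ω) (gaussianReal 0 v) P where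
  aemeasurable := by
    have := hZ.aemeasurable
    have := hW.aemeasurable
    fun_prop
  map_eq := by
    have hsum := gaussianReal_add_gaussianReal_of_indepFun
      (hZW.comp (measurable_const_mul a) (measurable_const_mul (-b)))
      (gaussianReal_const_mul hZ a).map_eq (gaussianReal_const_mul hW (-b)).map_eq
    convert hsum using 2
    · ext ω
      simp [sub_eq_add_neg]
    · simp
    · ext
      simp [← add_mul, hab]

lemma gaussianReal_real_Iic_neg (hv : v ≠ 0) (x : ℝ) :
    (gaussianReal 0 v).real (Set.Iic (-x)) = 1 - (gaussianReal 0 v).real (Set.Iic x) := by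
  have := nullSingletonClass_gaussianReal (μ := 0) hv
  have hneg : (gaussianReal 0 v).map (fun x ↦ -x) = gaussianReal 0 v := by
    simp [gaussianReal_map_neg]
  calc (gaussianReal 0 v).real (Set.Iic (-x))
      = (gaussianReal 0 v).real (Set.Ici x) := by
        conv_lhs => rw [← hneg]
        rw [map_measureReal_apply (by fun_prop) measurableSet_Iic]
        simp
    _ = (gaussianReal 0 v).real (Set.Iic x)ᶜ := by
        rw [Set.compl_Iic, measureReal_congr Ioi_ae_eq_Ici]
    _ = 1 - (gaussianReal 0 v).real (Set.Iic x) := probReal_compl_eq_one_sub measurableSet_Iic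

lemma gaussianReal_real_abs_le (hv : v ≠ 0) {x : ℝ} (hx : 0 ≤ x) :
    (gaussianReal 0 v).real {y | |y| ≤ x} = 2 * cdf (gaussianReal 0 v) x - 1 := by
  have := nullSingletonClass_gaussianReal (μ := 0) hv
  have hset : {y : ℝ | |y| ≤ x} = Set.Icc (-x) x := by
    ext y
    simp [abs_le]
  rw [hset, ← measureReal_congr Ioc_ae_eq_Icc, ← Set.Iic_sdiff_Iic, measureReal_sdiff
    (Set.Iic_subset_Iic.2 (neg_le_self hx)) measurableSet_Iic, gaussianReal_real_Iic_neg hv,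
    cdf_eq_real]
  ring

lemma gaussianReal_abs_eq (hv : v ≠ 0) (x : ℝ) : gaussianReal 0 v {y | |y| = x} = 0 := by
  have := nullSingletonClass_gaussianReal (μ := 0) hv
  have hsub : {y : ℝ | |y| = x} ⊆ {x, -x} := fun y hy ↦ eq_or_eq_neg_of_abs_eq hy
  exact measure_mono_null hsub ((Set.toFinite _).measure_zero _)

lemma nonneg_of_half_lt_cdf_gaussianReal (hv : v ≠ 0) {x : ℝ}
    (hx : 1 / 2 < cdf (gaussianReal 0 v) x) : 0 ≤ x := by
  by_contra! hneg
  have hle : (gaussianReal 0 v).real (Set.Iic x) ≤ (gaussianReal 0 v).real (Set.Iic (-x)) :=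
    measureReal_mono (Set.Iic_subset_Iic.2 (by linarith))
  rw [cdf_eq_real] at hx
  linarith [gaussianReal_real_Iic_neg hv x]

end StandardNormal

section Pivot

/-- The normal-approximation interval `r̃ ± z Ṽ` for a relative risk, computed from the counts `x`
out of `n` and `y` out of `m`, contains `r`. -/
def RelativeRiskIntervalCovers (z : ℝ) (n m : ℕ) (x y r : ℝ) : Prop :=
  |x / n / (y / m) - r| ≤ z * (x / n / (y / m) * √(1 / x - 1 / n + 1 / y - 1 / m))

/-- The standard deviation of `X / (n p)` for `X ∼ Bin(n, p)`. -/
noncomputable def relStdDev (n : ℕ) (p : ℝ) : ℝ := √((1 - p) / (n * p))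

/-- The statistic whose sign decides coverage, in terms of the standardized counts `u`, `v`, the
relative counts `A = x / (n p)`, `B = y / (m q)`, and the unit vector `(a, b)` along the pair of
relative standard deviations. Denominators are cleared, so that it is continuous everywhere. -/
noncomputable def coveragePivot (p q z a b u v A B : ℝ) : ℝ :=
  B * |a * u - b * v| - z * √(a ^ 2 * (A * B ^ 2 * ((1 - p * A) / (1 - p))) +
    b ^ 2 * (A ^ 2 * B * ((1 - q * B) / (1 - q))))

lemma coveragePivot_one_one {p q : ℝ} (hp : p < 1) (hq : q < 1) (z u v : ℝ) {a b : ℝ}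
    (hab : a ^ 2 + b ^ 2 = 1) : coveragePivot p q z a b u v 1 1 = |a * u - b * v| - z := by
  have hp' : 1 - p ≠ 0 := by linarith
  have hq' : 1 - q ≠ 0 := by linarith
  simp [coveragePivot, hp', hq', hab]

lemma abs_sub_le_iff_coveragePivot_nonpos {p q z a b c d σ u v A B n m : ℝ} (hp : p ∈ Set.Ioo 0 1)
    (hq : q ∈ Set.Ioo 0 1) (hn : 0 < n) (hm : 0 < m) (hσ : 0 < σ) (hc : c = σ * a) (hd : d = σ * b)
    (hc2 : c ^ 2 = (1 - p) / (n * p)) (hd2 : d ^ 2 = (1 - q) / (m * q))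
    (hA : A = 1 + c * u) (hB : B = 1 + d * v) (hA0 : 0 < A) (hB0 : 0 < B) :
    |n * p * A / n / (m * q * B / m) - p / q| ≤ z * (n * p * A / n / (m * q * B / m) *
        √(1 / (n * p * A) - 1 / n + 1 / (m * q * B) - 1 / m)) ↔
      coveragePivot p q z a b u v A B ≤ 0 := by
  obtain ⟨hp0, hp1⟩ := hp
  obtain ⟨hq0, hq1⟩ := hq
  have hp1' : 1 - p ≠ 0 := by linarith
  have hq1' : 1 - q ≠ 0 := by linarith
  set Q := a ^ 2 * (A * B ^ 2 * ((1 - p * A) / (1 - p))) +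
    b ^ 2 * (A ^ 2 * B * ((1 - q * B) / (1 - q))) with hQ
  have hratio : n * p * A / n / (m * q * B / m) = p / q * (A / B) := by field_simp
  have hdiff : p / q * (A / B) - p / q = p / q * σ / B ^ 2 * (B * (a * u - b * v)) := by
    have : A - B = σ * (a * u - b * v) := by rw [hA, hB, hc, hd]; ring
    field_simp
    linear_combination this
  have hvar : 1 / (n * p * A) - 1 / n + 1 / (m * q * B) - 1 / m = (σ / (A * B)) ^ 2 * Q := by
    have hx : 1 / (n * p * A) - 1 / n = c ^ 2 * ((1 - p * A) / ((1 - p) * A)) := by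
      rw [hc2]; field_simp
    have hy : 1 / (m * q * B) - 1 / m = d ^ 2 * ((1 - q * B) / ((1 - q) * B)) := by
      rw [hd2]; field_simp
    rw [add_sub_assoc, hx, hy, hc, hd, hQ]
    field_simp
  have hscale : p / q * (A / B) * (σ / (A * B) * √Q) = p / q * σ / B ^ 2 * √Q := by field_simp
  have hpos : 0 < p / q * σ / B ^ 2 := by positivity
  rw [hratio, hdiff, hvar, Real.sqrt_mul (sq_nonneg _), Real.sqrt_sq (by positivity), hscale,
    abs_mul, abs_of_pos hpos, mul_left_comm z, mul_le_mul_iff_right₀ hpos, abs_mul, abs_of_pos hB0,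
    coveragePivot, sub_nonpos]

lemma relStdDev_pos {n : ℕ} (hn : 0 < n) {p : ℝ} (hp : p ∈ Set.Ioo 0 1) : 0 < relStdDev n p :=
  Real.sqrt_pos.2 (div_pos (sub_pos.2 hp.2) (mul_pos (Nat.cast_pos.2 hn) hp.1))

lemma tendsto_relStdDev {p : ℝ} (hp : 0 < p) : Tendsto (relStdDev · p) atTop (𝓝 0) := by
  simpa [relStdDev] using (tendsto_const_nhds (x := 1 - p).div_atTop
    (tendsto_natCast_atTop_atTop.atTop_mul_const hp)).sqrt

lemma mul_mul_one_add_relStdDev_mul_standardizedCount {n : ℕ} (hn : 0 < n) {p : ℝ}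
    (hp : p ∈ Set.Ioo 0 1) (x : ℝ) :
    n * p * (1 + relStdDev n p * standardizedCount n p x) = x := by
  have : (0 : ℝ) < n := Nat.cast_pos.2 hn
  have hp0 := hp.1
  have hp1 : 0 < 1 - p := sub_pos.2 hp.2
  have hsqrt : √(n * (p * (1 - p))) = n * p * relStdDev n p := by
    rw [relStdDev, show n * (p * (1 - p)) = (n * p) ^ 2 * ((1 - p) / (n * p)) by field_simp,
      Real.sqrt_mul (by positivity), Real.sqrt_sq (by positivity)]
  have := relStdDev_pos hn hp
  rw [standardizedCount, hsqrt]
  field_simp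
  ring

lemma relStdDev_sq (n : ℕ) {p : ℝ} (hp : p ∈ Set.Ioo 0 1) :
    relStdDev n p ^ 2 = (1 - p) / (n * p) :=
  Real.sq_sqrt (div_nonneg (sub_nonneg.2 hp.2.le) (mul_nonneg n.cast_nonneg hp.1.le))

/-- The unit vector along the pair of relative standard deviations of two independent binomial
counts. -/
noncomputable def relStdDevDirection (n m : ℕ) (p q : ℝ) : ℝ × ℝ :=
  (relStdDev n p / √(relStdDev n p ^ 2 + relStdDev m q ^ 2),
    relStdDev m q / √(relStdDev n p ^ 2 + relStdDev m q ^ 2))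

lemma relStdDevDirection_sq_add_sq {n m : ℕ} (hn : 0 < n) {p q : ℝ} (hp : p ∈ Set.Ioo 0 1) :
    (relStdDevDirection n m p q).1 ^ 2 + (relStdDevDirection n m p q).2 ^ 2 = 1 := by
  have hc := relStdDev_pos hn hp
  simp only [relStdDevDirection, div_pow]
  rw [Real.sq_sqrt (by positivity)]
  field_simp

lemma relativeRiskIntervalCovers_iff_coveragePivot_nonpos {p q : ℝ} (hp : p ∈ Set.Ioo 0 1)
    (hq : q ∈ Set.Ioo 0 1) {n m : ℕ} (hn : 0 < n) (hm : 0 < m) (z : ℝ) {x y : ℝ}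
    (hx : 0 < 1 + relStdDev n p * standardizedCount n p x)
    (hy : 0 < 1 + relStdDev m q * standardizedCount m q y) :
    RelativeRiskIntervalCovers z n m x y (p / q) ↔
      coveragePivot p q z (relStdDevDirection n m p q).1 (relStdDevDirection n m p q).2
        (standardizedCount n p x) (standardizedCount m q y)
        (1 + relStdDev n p * standardizedCount n p x)
        (1 + relStdDev m q * standardizedCount m q y) ≤ 0 := by
  have hσ : 0 < √(relStdDev n p ^ 2 + relStdDev m q ^ 2) := by
    have := relStdDev_pos hn hp
    positivity
  have key := abs_sub_le_iff_coveragePivot_nonpos (z := z) hp hq (Nat.cast_pos.2 hn)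
    (Nat.cast_pos.2 hm) hσ (mul_div_cancel₀ _ hσ.ne').symm (mul_div_cancel₀ _ hσ.ne').symm
    (relStdDev_sq n hp) (relStdDev_sq m hq) rfl rfl hx hy
  rwa [mul_mul_one_add_relStdDev_mul_standardizedCount hn hp,
    mul_mul_one_add_relStdDev_mul_standardizedCount hm hq] at key

end Pivot

section Coverage

variable {ι Ω Ω' : Type*} {mΩ : MeasurableSpace Ω} {mΩ' : MeasurableSpace Ω'}
  {P : Measure Ω} {P' : Measure Ω'} [IsProbabilityMeasure P] [IsProbabilityMeasure P']
  {l : Filter ι} [l.IsCountablyGenerated] {p q : ℝ} {n m : ι → ℕ} {x y : ι → Ω → ℝ} {Z W : Ω' → ℝ}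

lemma tendstoInDistribution_one_add_relStdDev_mul (hp : 0 < p) (hq : 0 < q)
    (hn : Tendsto n l atTop) (hm : Tendsto m l atTop) {U V : ι → Ω → ℝ}
    (hUV : TendstoInDistribution (fun i ω ↦ (U i ω, V i ω)) l (fun ω ↦ (Z ω, W ω))
      (fun _ ↦ P) P') :
    TendstoInDistribution (fun i ω ↦ ((U i ω, V i ω),
      (1 + relStdDev (n i) p * U i ω, 1 + relStdDev (m i) q * V i ω))) l
      (fun ω ↦ ((Z ω, W ω), ((1 : ℝ), (1 : ℝ)))) (fun _ ↦ P) P' := by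
  have key := tendstoInDistribution_comp_prodMk_of_tendsto hUV
    (g := fun w : (ℝ × ℝ) × (ℝ × ℝ) ↦ (w.1, (1 + w.2.1 * w.1.1, 1 + w.2.2 * w.1.2)))
    (by fun_prop) (((tendsto_relStdDev hp).comp hn).prodMk_nhds ((tendsto_relStdDev hq).comp hm))
  simpa only [zero_mul, add_zero, Function.comp_apply] using key

lemma isCompact_setOf_sq_add_sq_eq_one : IsCompact {s : ℝ × ℝ | s.1 ^ 2 + s.2 ^ 2 = 1} := by
  refine (isCompact_Icc (a := ((-1 : ℝ), (-1 : ℝ))) (b := (1, 1))).of_isClosed_subset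
    (isClosed_eq (by fun_prop) (by fun_prop)) fun s hs ↦ ?_
  rw [Set.mem_ofPred_eq] at hs
  refine ⟨⟨?_, ?_⟩, ?_, ?_⟩ <;> dsimp only <;> nlinarith [sq_nonneg s.1, sq_nonneg s.2]

theorem tendsto_coveragePivot_nonpos (hp : p < 1) (hq : q < 1) (z : ℝ)
    {U V A B : ι → Ω → ℝ} (hUV : TendstoInDistribution (fun i ω ↦ ((U i ω, V i ω), (A i ω, B i ω)))
      l (fun ω ↦ ((Z ω, W ω), ((1 : ℝ), (1 : ℝ)))) (fun _ ↦ P) P')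
    (hZ : HasLaw Z (gaussianReal 0 1) P') (hW : HasLaw W (gaussianReal 0 1) P')
    (hZW : IndepFun Z W P') {s : ι → ℝ × ℝ} (hs : ∀ᶠ i in l, (s i).1 ^ 2 + (s i).2 ^ 2 = 1) :
    Tendsto (fun i ↦ P.real {ω |
        coveragePivot p q z (s i).1 (s i).2 (U i ω) (V i ω) (A i ω) (B i ω) ≤ 0}) l
      (𝓝 ((gaussianReal 0 1).real {t | |t| ≤ z})) := by
  have hpivot := tendstoInDistribution_comp_prodMk_of_isCompact hUV
    (g := fun w : ((ℝ × ℝ) × (ℝ × ℝ)) × (ℝ × ℝ) ↦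
      coveragePivot p q z w.2.1 w.2.2 w.1.1.1 w.1.1.2 w.1.2.1 w.1.2.2)
    (T := fun t ↦ |t| - z) (P'' := gaussianReal 0 1)
    (by unfold coveragePivot; fun_prop) isCompact_setOf_sq_add_sq_eq_one hs (by fun_prop)
    fun t ht ↦ by
      simp only [coveragePivot_one_one hp hq z _ _ ht]
      have hlaw := hasLaw_mul_sub_mul_gaussianReal hZ hW hZW ht
      rw [← hlaw.map_eq, AEMeasurable.map_map_of_aemeasurable (by fun_prop) hlaw.aemeasurable]
      rfl
  have key := tendsto_measureReal_of_null_frontier hpivot (measurableSet_Iic (a := (0 : ℝ))) (by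
    rw [frontier_Iic, Measure.map_apply (by fun_prop) (measurableSet_singleton 0)]
    simpa [Set.preimage, sub_eq_zero] using gaussianReal_abs_eq one_ne_zero z)
  simpa only [Set.mem_Iic, sub_nonpos] using key

theorem tendsto_relativeRiskIntervalCovers (hp : p ∈ Set.Ioo 0 1) (hq : q ∈ Set.Ioo 0 1)
    (hn : Tendsto n l atTop) (hm : Tendsto m l atTop) (z : ℝ)
    (hxy : TendstoInDistribution
      (fun i ω ↦ (standardizedCount (n i) p (x i ω), standardizedCount (m i) q (y i ω))) l
      (fun ω ↦ (Z ω, W ω)) (fun _ ↦ P) P')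
    (hZ : HasLaw Z (gaussianReal 0 1) P') (hW : HasLaw W (gaussianReal 0 1) P')
    (hZW : IndepFun Z W P') :
    Tendsto (fun i ↦ P.real
      {ω | RelativeRiskIntervalCovers z (n i) (m i) (x i ω) (y i ω) (p / q)}) l
      (𝓝 ((gaussianReal 0 1).real {t | |t| ≤ z})) := by
  have hrel := tendstoInDistribution_one_add_relStdDev_mul hp.1 hq.1 hn hm hxy
  have hrel' := hrel.continuous_comp (g := Prod.snd) continuous_snd
  have hpos := (hn.eventually_gt_atTop 0).and (hm.eventually_gt_atTop 0)
  refine tendsto_measureReal_of_mem_iff_of_notMem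
    (tendsto_coveragePivot_nonpos hp.2 hq.2 z hrel hZ hW hZW
      (s := fun i ↦ relStdDevDirection (n i) (m i) p q)
      (hpos.mono fun i hi ↦ relStdDevDirection_sq_add_sq hi.1 hp))
    (tendsto_measureReal_mem_of_notMem_of_isClosed hrel' (A := {w | min w.1 w.2 ≤ 0})
      (isClosed_le (by fun_prop) (by fun_prop)) (by simp [one_pos.not_ge])) ?_
  filter_upwards [hpos] with i hi ω hω
  simp only [Function.comp_apply, not_le, lt_min_iff] at hω
  exact relativeRiskIntervalCovers_iff_coveragePivot_nonpos hp hq hi.1 hi.2 z hω.1 hω.2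

lemma standardizedCount_add (n : ℕ) (p x t : ℝ) :
    standardizedCount n p (x + t) = standardizedCount n p x + (√n)⁻¹ * t / √(p * (1 - p)) := by
  rw [standardizedCount, standardizedCount, Real.sqrt_mul n.cast_nonneg]
  ring

lemma tendstoInDistribution_standardizedCount_add {Lx Ly : ι → Ω → ℝ}
    (hxy : TendstoInDistribution
      (fun i ω ↦ (standardizedCount (n i) p (x i ω), standardizedCount (m i) q (y i ω))) l
      (fun ω ↦ (Z ω, W ω)) (fun _ ↦ P) P')
    (hmLx : ∀ i, AEMeasurable (Lx i) P) (hmLy : ∀ i, AEMeasurable (Ly i) P)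
    (hLx : TendstoInMeasure P (fun i ω ↦ (√(n i))⁻¹ * Lx i ω) l fun _ ↦ 0)
    (hLy : TendstoInMeasure P (fun i ω ↦ (√(m i))⁻¹ * Ly i ω) l fun _ ↦ 0) :
    TendstoInDistribution
      (fun i ω ↦ (standardizedCount (n i) p (x i ω + Lx i ω),
        standardizedCount (m i) q (y i ω + Ly i ω))) l
      (fun ω ↦ (Z ω, W ω)) (fun _ ↦ P) P' := by
  have hx := hxy.continuous_comp_prodMk_of_tendstoInMeasure_const
    (g := fun w : (ℝ × ℝ) × ℝ ↦ (w.1.1 + w.2 / √(p * (1 - p)), w.1.2)) (by fun_prop) hLx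
    fun i ↦ by fun_prop
  have hy := hx.continuous_comp_prodMk_of_tendstoInMeasure_const
    (g := fun w : (ℝ × ℝ) × ℝ ↦ (w.1.1, w.1.2 + w.2 / √(q * (1 - q)))) (by fun_prop) hLy
    fun i ↦ by fun_prop
  simpa only [standardizedCount_add, zero_div, add_zero] using hy

theorem relative_risk_CI_valid_laplace_general {α z : ℝ} (hp : p ∈ Set.Ioo 0 1)
    (hq : q ∈ Set.Ioo 0 1) (hα : α < 1) (hz : cdf (gaussianReal 0 1) z = 1 - α / 2)
    (hn : Tendsto n l atTop) (hm : Tendsto m l atTop) {X Y Lx Ly : ι → Ω → ℝ}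
    (hX : ∀ i, HasLaw (X i) (binomialReal (n i) p hp.2.le) P)
    (hY : ∀ i, HasLaw (Y i) (binomialReal (m i) q hq.2.le) P)
    (hXY : ∀ i, IndepFun (X i) (Y i) P)
    (hmLx : ∀ i, AEMeasurable (Lx i) P) (hmLy : ∀ i, AEMeasurable (Ly i) P)
    (hLx : TendstoInMeasure P (fun i ω ↦ (√(n i))⁻¹ * Lx i ω) l fun _ ↦ 0)
    (hLy : TendstoInMeasure P (fun i ω ↦ (√(m i))⁻¹ * Ly i ω) l fun _ ↦ 0) :
    Tendsto (fun i ↦ P.real {ω | RelativeRiskIntervalCovers z (n i) (m i)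
      (X i ω + Lx i ω) (Y i ω + Ly i ω) (p / q)}) l (𝓝 (1 - α)) := by
  let N := gaussianReal 0 1
  have hZ : HasLaw Prod.fst N (N.prod N) := measurePreserving_fst.hasLaw
  have hW : HasLaw Prod.snd N (N.prod N) := measurePreserving_snd.hasLaw
  have hZW : IndepFun Prod.fst Prod.snd (N.prod N) := indepFun_prod measurable_id measurable_id
  have hcounts := tendstoInDistribution_prodMk_of_indepFun
    (tendstoInDistribution_standardizedCount hp hn hX hZ)
    (tendstoInDistribution_standardizedCount hq hm hY hW)
    (fun i ↦ (hXY i).comp (measurable_standardizedCount _ _) (measurable_standardizedCount _ _))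
    hZW
  have hz0 : 0 ≤ z := nonneg_of_half_lt_cdf_gaussianReal one_ne_zero (by linarith)
  have hcoverage : N.real {t | |t| ≤ z} = 1 - α := by
    rw [gaussianReal_real_abs_le one_ne_zero hz0, hz]
    ring
  rw [← hcoverage]
  exact tendsto_relativeRiskIntervalCovers hp hq hn hm z
    (tendstoInDistribution_standardizedCount_add hcounts hmLx hmLy hLx hLy) hZ hW hZW

end Coverage

/-- **Asymptotically valid confidence interval for the relative risk with the Laplace
mechanism.**  With `z = Φ⁻¹(1 − α/2)` and independent `Lap(2/ε)` noises added to the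
binomial counts, the normal-approximation interval `p̃_k ± z·Ṽ_k` has asymptotic
coverage `1 − α`. -/
theorem relative_risk_CI_valid_laplace {Ω : Type*} [MeasurableSpace Ω]
    (P : Measure Ω) [IsProbabilityMeasure P]
    (px py ε α z : ℝ) (hpx : px ∈ Set.Ioo (0 : ℝ) 1) (hpy : py ∈ Set.Ioo (0 : ℝ) 1)
    (hε : 0 < ε) (hα : α ∈ Set.Ioo (0 : ℝ) 1)
    (hz : cdf (gaussianReal 0 1) z = 1 - α / 2)
    (nx ny : ℕ → ℕ) (hnx : ∀ k, 0 < nx k) (hny : ∀ k, 0 < ny k)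
    (hnxTop : Tendsto nx atTop atTop) (hnyTop : Tendsto ny atTop atTop)
    (X Y Lx Ly : ℕ → Ω → ℝ)
    (hmX : ∀ k, Measurable (X k)) (hmY : ∀ k, Measurable (Y k))
    (hmLx : ∀ k, Measurable (Lx k)) (hmLy : ∀ k, Measurable (Ly k))
    (hlawX : ∀ k, Measure.map (X k) P = binomialReal (nx k) px hpx.2.le)
    (hlawY : ∀ k, Measure.map (Y k) P = binomialReal (ny k) py hpy.2.le)
    (hlawLx : ∀ k, Measure.map (Lx k) P = laplaceMeasure 0 (2 / ε))
    (hlawLy : ∀ k, Measure.map (Ly k) P = laplaceMeasure 0 (2 / ε))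
    (hindep : ∀ k, iIndepFun ![X k, Y k, Lx k, Ly k] P) :
    Tendsto
      (fun k =>
        (P {ω |
          |((X k ω + Lx k ω) / (nx k : ℝ)) / ((Y k ω + Ly k ω) / (ny k : ℝ)) - px / py| ≤
            z * (((X k ω + Lx k ω) / (nx k : ℝ)) / ((Y k ω + Ly k ω) / (ny k : ℝ)) *
              Real.sqrt (1 / (X k ω + Lx k ω) - 1 / (nx k : ℝ) +
                1 / (Y k ω + Ly k ω) - 1 / (ny k : ℝ)))}).toReal)
      atTop (nhds (1 - α)) := by
  have hLx (k : ℕ) : IdentDistrib (Lx 0) (Lx k) P P :=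
    ⟨(hmLx 0).aemeasurable, (hmLx k).aemeasurable, (hlawLx 0).trans (hlawLx k).symm⟩
  have hLy (k : ℕ) : IdentDistrib (Ly 0) (Ly k) P P :=
    ⟨(hmLy 0).aemeasurable, (hmLy k).aemeasurable, (hlawLy 0).trans (hlawLy k).symm⟩
  exact relative_risk_CI_valid_laplace_general hpx hpy hα.2 hz hnxTop hnyTop
    (fun k ↦ ⟨(hmX k).aemeasurable, hlawX k⟩) (fun k ↦ ⟨(hmY k).aemeasurable, hlawY k⟩)
    (fun k ↦ (hindep k).indepFun (by decide : (0 : Fin 4) ≠ 1))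
    (fun k ↦ (hmLx k).aemeasurable) (fun k ↦ (hmLy k).aemeasurable)
    (tendstoInMeasure_inv_sqrt_natCast_smul_of_identDistrib hnxTop 0 hLx)
    (tendstoInMeasure_inv_sqrt_natCast_smul_of_identDistrib hnyTop 0 hLy)
end
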